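/- arXiv:1907.06107 — 4 statements merged into one kernel-verified Lean document; each statement's English description precedes it below -/
import Mathlib

section
/- Let k be a field of characteristic zero and n ≥ 1. The k-linear subspace V = {C ∈ M_n(k) : Tr C = 0} of the matrix algebra M_n(k) is a left Mathieu–Zhao space of M_n(k). -/
/-- `V` is a left Mathieu–Zhao space of `A`: for every `a` in the radical of `V`
(i.e. `a ^ m ∈ V` for all sufficiently large `m`) and every `b ∈ A`, there is `N ≥ 1`
such that `b * a ^ m ∈ V` for all `m ≥ N`. -/
def IsLeftMZ {A : Type*} [Ring A] (V : Set A) : Prop :=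
  ∀ a : A, (∃ N : ℕ, 1 ≤ N ∧ ∀ m : ℕ, N ≤ m → a ^ m ∈ V) →
    ∀ b : A, ∃ N : ℕ, 1 ≤ N ∧ ∀ m : ℕ, N ≤ m → b * a ^ m ∈ V

/-!
Write an annihilating polynomial of an algebraic element `a` as `X ^ r * q` with `q` coprime to `X`,
and let `u * X ^ (N + r) + v * q = 1`. Then `e = (u * X ^ (N + r))(a)` is idempotent, because
`e * (1 - e)` is a multiple of `a ^ r * q(a)`, and `a ^ r * e = a ^ r` for the same reason. If `V`
contains the high powers of `a` it contains `e`, so as soon as `V` contains the left ideal generated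
by each of its idempotents, it contains `b * a ^ m = (b * a ^ m) * e` for all `m ≥ r`. In
characteristic zero the trace of an idempotent matrix is its rank, so `0` is the only idempotent of
trace zero.
-/

open Polynomial

theorem aeval_mem_of_X_pow_dvd {R A : Type*} [CommSemiring R] [Semiring A] [Algebra R A]
    {V : Submodule R A} {a : A} {N : ℕ} (ha : ∀ m, N ≤ m → a ^ m ∈ V) {p : R[X]}
    (hp : X ^ N ∣ p) : aeval a p ∈ V := by
  rw [aeval_eq_sum_range]
  refine V.sum_mem fun i _ => ?_
  obtain hi | hi := lt_or_ge i N
  · rw [X_pow_dvd_iff.mp hp i hi, zero_smul]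
    exact V.zero_mem
  · exact V.smul_mem _ (ha i hi)

theorem exists_isIdempotentElem_aeval_of_isAlgebraic {k A : Type*} [Field k] [Ring A] [Algebra k A]
    {a : A} (ha : IsAlgebraic k a) (N : ℕ) :
    ∃ p : k[X], X ^ N ∣ p ∧ IsIdempotentElem (aeval a p) ∧ ∃ r, a ^ r * aeval a p = a ^ r := by
  obtain ⟨f, hf, hfa⟩ := ha
  obtain ⟨q, hfq, hq⟩ := exists_eq_pow_rootMultiplicity_mul_and_not_dvd f hf 0
  rw [C_0, sub_zero] at hfq hq
  set r := rootMultiplicity 0 f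
  obtain ⟨u, v, huv⟩ : IsCoprime (X ^ (N + r)) q :=
    (irreducible_X.coprime_iff_not_dvd.mpr hq).pow_left
  have aeval_eq_of_dvd {g h : k[X]} (hgh : f ∣ g - h) : aeval a g = aeval a h := by
    rw [← sub_eq_zero, ← map_sub]
    exact aeval_eq_zero_of_dvd_aeval_eq_zero hgh hfa
  refine ⟨u * X ^ (N + r), ?_, ?_, r, ?_⟩
  · exact (pow_dvd_pow X (Nat.le_add_right N r)).mul_left u
  · rw [IsIdempotentElem, ← map_mul]
    refine aeval_eq_of_dvd ⟨-(u * v * X ^ N), ?_⟩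
    rw [hfq]
    linear_combination (u * X ^ (N + r)) * huv
  · rw [← aeval_X_pow (R := k), ← map_mul]
    refine aeval_eq_of_dvd ⟨-v, ?_⟩
    rw [hfq]
    linear_combination X ^ r * huv

/-- Zhao's idempotent criterion for Mathieu–Zhao spaces of an algebraic algebra. -/
theorem isLeftMZ_iff_forall_isIdempotentElem {k A : Type*} [Field k] [Ring A] [Algebra k A]
    [Algebra.IsAlgebraic k A] {V : Submodule k A} :
    IsLeftMZ (V : Set A) ↔ ∀ e ∈ V, IsIdempotentElem e → ∀ b, b * e ∈ V := by
  constructor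
  · intro hV e he hee b
    have hpow (m : ℕ) (hm : 1 ≤ m) : e ^ m = e := hee.pow_eq (Nat.one_le_iff_ne_zero.mp hm)
    obtain ⟨N, hN, hb⟩ := hV e ⟨1, le_rfl, fun m hm => (hpow m hm).symm ▸ he⟩ b
    exact hpow N hN ▸ hb N le_rfl
  · rintro hV a ⟨N, -, ha⟩ b
    obtain ⟨p, hp, he, r, hr⟩ :=
      exists_isIdempotentElem_aeval_of_isAlgebraic (Algebra.IsAlgebraic.isAlgebraic (R := k) a) N
    refine ⟨r + 1, Nat.le_add_left 1 r, fun m hm => ?_⟩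
    have ham : a ^ m * aeval a p = a ^ m := by
      rw [← Nat.sub_add_cancel (Nat.le_of_succ_le hm), pow_add, mul_assoc, hr]
    rw [← ham, ← mul_assoc]
    exact hV _ (aeval_mem_of_X_pow_dvd ha hp) he _

theorem eq_zero_of_isIdempotentElem_of_trace_eq_zero {R ι : Type*} [CommRing R] [IsDomain R]
    [IsPrincipalIdealRing R] [CharZero R] [Fintype ι] {e : Matrix ι ι R}
    (he : IsIdempotentElem e) (htr : e.trace = 0) : e = 0 := by
  classical
  have hlin : IsIdempotentElem (Matrix.toLin' e) := he.map (Matrix.toLinAlgEquiv' (R := R) (n := ι))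
  rw [← Matrix.trace_toLin'_eq] at htr
  exact Matrix.toLin'.map_eq_zero_iff.mp
    (LinearMap.IsIdempotentElem.eq_zero_of_trace_eq_zero hlin htr)

theorem stmt_3_general {k ι : Type*} [Field k] [CharZero k] [Fintype ι] [DecidableEq ι] :
    IsLeftMZ {C : Matrix ι ι k | Matrix.trace C = 0} := by
  change IsLeftMZ (LinearMap.ker (Matrix.traceLinearMap ι k k) : Set (Matrix ι ι k))
  refine isLeftMZ_iff_forall_isIdempotentElem.mpr fun e htr he b => ?_
  rw [eq_zero_of_isIdempotentElem_of_trace_eq_zero he htr, mul_zero]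
  exact Submodule.zero_mem _

/-- The trace-zero matrices form a left Mathieu–Zhao space of `M_n(k)`. -/
theorem stmt_3 {k : Type*} [Field k] [CharZero k] (n : ℕ) (hn : 1 ≤ n) :
    IsLeftMZ {C : Matrix (Fin n) (Fin n) k | Matrix.trace C = 0} :=
  stmt_3_general
end

section
/- Let V = {f ∈ ℂ[t] : ∫₀¹ f(t) dt = 0}. Then r(V) = 0, i.e. if f ∈ ℂ[t] satisfies ∫₀¹ f(t)^m dt = 0 for all sufficiently large m, then f = 0. In particular V is a Mathieu–Zhao space of ℂ[t]. -/
open MeasureTheory intervalIntegral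

/-- `V` is a Mathieu–Zhao space of the commutative ring `A`: for every `a` in the radical
of `V` (i.e. `a ^ m ∈ V` for all sufficiently large `m`) and every `b ∈ A`, there is `N ≥ 1`
such that `b * a ^ m ∈ V` for all `m ≥ N`. -/
def IsMZ {A : Type*} [CommRing A] (V : Set A) : Prop :=
  ∀ a : A, (∃ N : ℕ, 1 ≤ N ∧ ∀ m : ℕ, N ≤ m → a ^ m ∈ V) →
    ∀ b : A, ∃ N : ℕ, 1 ≤ N ∧ ∀ m : ℕ, N ≤ m → b * a ^ m ∈ V

/-!
Let `g` be monic of degree `d ≥ 1` over a field of characteristic zero and let `A` be the ring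
generated over `ℤ` by its coefficients. If `p = m * d + 1` is prime and `∫₀¹ g ^ m = 0`, then
multiplying by `(m * d)!` clears every denominator `j + 1` of the integral except that of the
leading term, so `p` divides `(m * d)!` in `A`; since these integers are coprime, `p` is a unit
of `A`. There are infinitely many primes `p ≡ 1 [MOD d]`. But `A` is flat and of finite presentation
over `ℤ`, so `Spec A → Spec ℤ` is open and only finitely many primes can be units of `A`.
-/

section

open Polynomial
open scoped Nat

theorem IsMZ.of_radical_eq_zero {A : Type*} [CommRing A] {V : Set A} (zero_mem : 0 ∈ V)
    (radical_eq_zero : ∀ a : A, (∃ N : ℕ, 1 ≤ N ∧ ∀ m : ℕ, N ≤ m → a ^ m ∈ V) → a = 0) :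
    IsMZ V := by
  intro a ha b
  refine ⟨1, le_rfl, fun m hm => ?_⟩
  rw [radical_eq_zero a ha, zero_pow (Nat.one_le_iff_ne_zero.1 hm), mul_zero]
  exact zero_mem

theorem exists_not_isNilpotent_forall_prime_not_isUnit (R A : Type*) [CommRing R] [CommRing A]
    [Nontrivial A] [Algebra R A] [Algebra.HasGoingDown R A] [Algebra.FinitePresentation R A] :
    ∃ r : R, ¬IsNilpotent r ∧ ∀ p : R, Prime p → ¬p ∣ r → ¬IsUnit (algebraMap R A p) := by
  have isOpen_range : IsOpen (Set.range (PrimeSpectrum.comap (algebraMap R A))) :=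
    PrimeSpectrum.isOpenMap_comap_of_hasGoingDown_of_finitePresentation.isOpen_range
  obtain ⟨_, ⟨r, rfl⟩, mem_basicOpen, basicOpen_subset⟩ :=
    PrimeSpectrum.isTopologicalBasis_basic_opens.exists_subset_of_mem_open
      (Set.mem_range_self (Classical.arbitrary (PrimeSpectrum A))) isOpen_range
  refine ⟨r, fun hr => mem_basicOpen (nilpotent_iff_mem_prime.1 hr _ inferInstance), ?_⟩
  intro p hp hpr hunit
  have hspan : (Ideal.span {p}).IsPrime := (Ideal.span_singleton_prime hp.ne_zero).2 hp
  obtain ⟨q, hq⟩ := basicOpen_subset (show ⟨_, hspan⟩ ∈ _ from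
    fun h => hpr (Ideal.mem_span_singleton.1 h))
  have hpq : p ∈ (PrimeSpectrum.comap (algebraMap R A) q).asIdeal :=
    hq ▸ Ideal.mem_span_singleton_self p
  exact q.2.ne_top (Ideal.eq_top_of_isUnit_mem _ hpq hunit)

theorem exists_forall_prime_gt_not_isUnit_natCast (A : Type*) [CommRing A] [Nontrivial A]
    [Module.IsTorsionFree ℤ A] [Algebra.FiniteType ℤ A] :
    ∃ B : ℕ, ∀ p : ℕ, p.Prime → B < p → ¬IsUnit (p : A) := by
  have : Algebra.FinitePresentation ℤ A := Algebra.FinitePresentation.of_finiteType.1 ‹_›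
  obtain ⟨r, hr, hunit⟩ := exists_not_isNilpotent_forall_prime_not_isUnit ℤ A
  rw [isNilpotent_iff_eq_zero] at hr
  refine ⟨r.natAbs, fun p hp hlt => ?_⟩
  have hpr : ¬(p : ℤ) ∣ r := fun h =>
    hlt.not_ge (Nat.le_of_dvd (Int.natAbs_pos.2 hr) (Int.natCast_dvd.1 h))
  simpa only [map_natCast] using hunit p (Nat.prime_iff_prime_int.1 hp) hpr

theorem exists_monic_lift_finiteType_subalgebra (R : Type*) {S : Type*} [CommRing R] [CommRing S]
    [Algebra R S] {g : S[X]} (hg : g.Monic) :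
    ∃ (A : Subalgebra R S) (a : A[X]), Algebra.FiniteType R A ∧
      a.map (algebraMap A S) = g ∧ a.Monic := by
  let A := Algebra.adjoin R (g.coeffs : Set S)
  have hlifts : g ∈ lifts (algebraMap A S) :=
    (lifts_iff_coeffs_subset_range _).2 fun x hx => ⟨⟨x, Algebra.subset_adjoin hx⟩, rfl⟩
  obtain ⟨a, hag, -, ha⟩ := lifts_and_natDegree_eq_and_monic hlifts hg
  exact ⟨A, a, .adjoin_of_finite g.coeffs.finite_toSet, hag, ha⟩

/-- The integral over `[0, 1]` as a formal functional on polynomials, `X ^ j ↦ 1 / (j + 1)`. -/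
noncomputable def unitIntegral (K : Type*) [Field K] : K[X] →ₗ[K] K :=
  lsum fun j => ((j : K) + 1)⁻¹ • LinearMap.id

section UnitIntegral

variable {K : Type*} [Field K]

theorem unitIntegral_eq_sum_range {n : ℕ} {f : K[X]} (hn : f.natDegree < n) :
    unitIntegral K f = ∑ j ∈ Finset.range n, ((j : K) + 1)⁻¹ * f.coeff j :=
  sum_over_range' f (fun j => map_zero (((j : K) + 1)⁻¹ • LinearMap.id)) n hn

theorem unitIntegral_C (c : K) : unitIntegral K (C c) = c := by
  simp [unitIntegral_eq_sum_range (n := 1) (f := C c) (by simp)]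

theorem integral_eval_eq_unitIntegral (f : ℂ[X]) :
    ∫ t in (0 : ℝ)..1, f.eval (t : ℂ) = unitIntegral ℂ f := by
  have integral_pow_ofReal (j : ℕ) : ∫ t in (0 : ℝ)..1, (t : ℂ) ^ j = ((j : ℂ) + 1)⁻¹ := by
    simp_rw [← Complex.ofReal_pow, intervalIntegral.integral_ofReal, integral_pow]
    simp
  simp_rw [unitIntegral_eq_sum_range f.natDegree.lt_succ_self, eval_eq_sum_range]
  rw [intervalIntegral.integral_finsetSum
    fun j _ => Continuous.intervalIntegrable (by fun_prop) _ _]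
  simp_rw [intervalIntegral.integral_const_mul, integral_pow_ofReal, mul_comm]

variable [CharZero K]

theorem natDegree_add_one_dvd_factorial_of_unitIntegral_eq_zero {A : Type*} [CommRing A]
    [Algebra A K] [FaithfulSMul A K] {G : A[X]} (hG : G.Monic)
    (h : unitIntegral K (G.map (algebraMap A K)) = 0) :
    ((G.natDegree + 1 : ℕ) : A) ∣ (G.natDegree ! : A) := by
  set n := G.natDegree with hn
  let c (j : ℕ) : K := algebraMap A K (G.coeff j)
  have hsum : ∑ j ∈ Finset.range n, ((j : K) + 1)⁻¹ * c j + ((n : K) + 1)⁻¹ = 0 := by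
    rw [unitIntegral_eq_sum_range (Nat.lt_succ_of_le natDegree_map_le), ← hn,
      Finset.sum_range_succ] at h
    simpa only [coeff_map, hn, hG.coeff_natDegree, map_one, mul_one] using h
  have hclear : ∑ j ∈ Finset.range n, ((n ! / (j + 1) : ℕ) : K) * c j =
      n ! * ∑ j ∈ Finset.range n, ((j : K) + 1)⁻¹ * c j := by
    rw [Finset.mul_sum]
    refine Finset.sum_congr rfl fun j hj => ?_
    rw [Nat.cast_div (Nat.dvd_factorial j.succ_pos (Finset.mem_range.1 hj))
      (Nat.cast_ne_zero.2 j.succ_ne_zero), Nat.cast_succ, div_eq_mul_inv, mul_assoc]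
  refine ⟨-∑ j ∈ Finset.range n, ((n ! / (j + 1) : ℕ) : A) * G.coeff j,
    FaithfulSMul.algebraMap_injective A K ?_⟩
  simp only [map_mul, map_neg, map_sum, map_natCast]
  rw [hclear, eq_neg_of_add_eq_zero_left hsum, Nat.cast_succ]
  have hn0 : (n : K) + 1 ≠ 0 := n.cast_add_one_ne_zero
  field_simp

theorem isUnit_natCast_of_unitIntegral_eq_zero {A : Type*} [CommRing A]
    [Algebra A K] [FaithfulSMul A K] {G : A[X]} (hG : G.Monic) {p : ℕ} (hp : p.Prime)
    (hdeg : p = G.natDegree + 1) (h : unitIntegral K (G.map (algebraMap A K)) = 0) :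
    IsUnit (p : A) := by
  have hcoprime : p.Coprime G.natDegree ! := hp.coprime_factorial_of_lt (by omega)
  refine hcoprime.cast.isUnit_of_dvd ?_
  rw [hdeg]
  exact natDegree_add_one_dvd_factorial_of_unitIntegral_eq_zero hG h

theorem natDegree_eq_zero_of_monic_of_unitIntegral_pow_eq_zero {g : K[X]} (hg : g.Monic) {N : ℕ}
    (h : ∀ m : ℕ, N ≤ m → unitIntegral K (g ^ m) = 0) : g.natDegree = 0 := by
  by_contra hd
  obtain ⟨A, a, _, rfl, ha⟩ := exists_monic_lift_finiteType_subalgebra ℤ hg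
  rw [ha.natDegree_map] at hd
  obtain ⟨B, hB⟩ := exists_forall_prime_gt_not_isUnit_natCast A
  obtain ⟨p, hp, hlt, hmod⟩ :=
    Nat.exists_prime_gt_modEq_one (B + a.natDegree * N) hd
  obtain ⟨m, hm⟩ := (Nat.modEq_iff_dvd' hp.one_le).1 hmod.symm
  have hNm : N ≤ m := Nat.le_of_mul_le_mul_left (by omega) (Nat.pos_of_ne_zero hd)
  refine hB p hp (by omega) (isUnit_natCast_of_unitIntegral_eq_zero (K := K) (ha.pow m) hp ?_ ?_)
  · rw [ha.natDegree_pow, mul_comm, ← hm, Nat.sub_add_cancel hp.one_le]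
  · rw [Polynomial.map_pow]
    exact h m hNm

theorem eq_zero_of_unitIntegral_pow_eq_zero {f : K[X]} {N : ℕ}
    (h : ∀ m : ℕ, N ≤ m → unitIntegral K (f ^ m) = 0) : f = 0 := by
  by_contra hf
  have hmonic (m : ℕ) (hm : N ≤ m) : unitIntegral K ((f * C f.leadingCoeff⁻¹) ^ m) = 0 := by
    rw [mul_pow, ← C_pow, mul_comm, ← smul_eq_C_mul, map_smul, h m hm, smul_zero]
  have hdeg : f.natDegree = 0 := by
    rw [← natDegree_mul_leadingCoeff_inv f hf]
    exact natDegree_eq_zero_of_monic_of_unitIntegral_pow_eq_zero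
      (monic_mul_leadingCoeff_inv hf) hmonic
  obtain ⟨c, rfl⟩ := natDegree_eq_zero.1 hdeg
  have hc : c ^ N = 0 := by simpa only [← C_pow, unitIntegral_C] using h N le_rfl
  exact hf (by rw [eq_zero_of_pow_eq_zero hc, C_0])

end UnitIntegral

theorem stmt_5_general (K : Type*) [Field K] [CharZero K] :
    (∀ f : K[X],
      (∃ N : ℕ, 1 ≤ N ∧ ∀ m : ℕ, N ≤ m → unitIntegral K (f ^ m) = 0) → f = 0) ∧
    IsMZ {f : K[X] | unitIntegral K f = 0} := by
  have radical_eq_zero (f : K[X])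
      (hf : ∃ N : ℕ, 1 ≤ N ∧ ∀ m : ℕ, N ≤ m → unitIntegral K (f ^ m) = 0) : f = 0 := by
    obtain ⟨N, -, hN⟩ := hf
    exact eq_zero_of_unitIntegral_pow_eq_zero hN
  exact ⟨radical_eq_zero, IsMZ.of_radical_eq_zero (map_zero _) radical_eq_zero⟩

end

/-- The subspace `V = {f ∈ ℂ[t] : ∫₀¹ f(t) dt = 0}` has radical `r(V) = 0`;
in particular `V` is a Mathieu–Zhao space of `ℂ[t]`. -/
theorem stmt_5 :
    (∀ f : Polynomial ℂ,
      (∃ N : ℕ, 1 ≤ N ∧ ∀ m : ℕ, N ≤ m →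
        (∫ t in (0:ℝ)..1, Polynomial.eval (t : ℂ) (f ^ m)) = 0) → f = 0) ∧
    IsMZ {f : Polynomial ℂ | (∫ t in (0:ℝ)..1, Polynomial.eval (t : ℂ) f) = 0} := by
  simpa only [integral_eval_eq_unitIntegral] using stmt_5_general ℂ
end

section
/- Crucial lemma: Let k be a field, A a commutative k-algebra, a_1,…,a_n ∈ A a regular sequence in A, and ImD = Σ_{i=1}^n (∂_{x_i} − a_i)·A[x_1,…,x_n]. Let b ∈ A[x_1,…,x_n] be a polynomial of total degree d and b_d its homogeneous component of degree d. If b ∈ ImD, then every coefficient of b_d belongs to the ideal I of A generated by a_1,…,a_n. -/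
/-- `ImD = Σᵢ (∂_{xᵢ} - aᵢ)·A[x₁,…,xₙ]`. -/
def ImD {A : Type*} [CommRing A] {n : ℕ} (a : Fin n → A) :
    Set (MvPolynomial (Fin n) A) :=
  {h | ∃ g : Fin n → MvPolynomial (Fin n) A,
    h = ∑ i, (MvPolynomial.pderiv i (g i) - MvPolynomial.C (a i) * g i)}

/-- `(a₁,…,aₙ)` is a regular sequence in `A`: each `aᵢ` is a non-zerodivisor modulo
`(a₁,…,a_{i-1})`, and the ideal generated by all `aᵢ` is proper. -/
def IsRegSeq {A : Type*} [CommRing A] {n : ℕ} (a : Fin n → A) : Prop :=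
  (∀ i : Fin n, ∀ x : A,
      x * a i ∈ Ideal.span (a '' {j | j < i}) → x ∈ Ideal.span (a '' {j | j < i})) ∧
    Ideal.span (Set.range a) ≠ ⊤

/-!
If the top-degree parts of a family `g` have degree `N` larger than that of
`b = ∑ i, (∂ᵢ - aᵢ) (g i)`, comparing components of degree `N` shows that they form a syzygy of `a`.
A regular sequence has only Koszul syzygies, so these parts are `∑ j, aⱼ • (c i j - c j i)` with `c`
homogeneous of degree `N`. Adding `∑ j, (∂ⱼ - aⱼ) (c i j - c j i)` to `g i` kills them, and leaves
`b` unchanged because the operators `∂ᵢ - aᵢ` commute. Hence we may assume that `g` has degree at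
most `deg b`, and then the leading form of `b` is `-∑ i, aᵢ • (leading form of g i)`.
-/

section KoszulSyzygies

variable {ι A M : Type*} [Fintype ι] [CommRing A] [AddCommGroup M] [Module A M]

/-- The first Koszul homology of `a` with coefficients in `M` vanishes: every syzygy of `a` in `M`
is a combination of the trivial ones `aⱼ eᵢ - aᵢ eⱼ`. The alternating matrix of coefficients is
written as `c - cᵀ`, so that no condition on the diagonal is needed. -/
def HasKoszulSyzygies (a : ι → A) (M : Type*) [AddCommGroup M] [Module A M] : Prop :=
  ∀ g : ι → M, ∑ i, a i • g i = 0 →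
    ∃ c : ι → ι → M, ∀ i, g i = ∑ j, a j • (c i j - c j i)

theorem HasKoszulSyzygies.of_flat [Module.Flat A M] {a : ι → A} (ha : HasKoszulSyzygies a A) :
    HasKoszulSyzygies a M := by
  intro g hg
  obtain ⟨k, α, y, hgα, hα⟩ := Module.Flat.isTrivialRelation_of_sum_smul_eq_zero hg
  choose c hc using fun l ↦ ha (α · l) (hα l)
  refine ⟨fun i j ↦ ∑ l, c l i j • y l, fun i ↦ ?_⟩
  simp only [hgα, hc, smul_eq_mul, ← Finset.sum_sub_distrib, ← sub_smul, Finset.smul_sum,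
    Finset.sum_smul, mul_smul]
  exact Finset.sum_comm

theorem HasKoszulSyzygies.snoc {n : ℕ} {a : Fin n → A} {r : A} (ha : HasKoszulSyzygies a A)
    (hr : ∀ x, x * r ∈ Ideal.span (Set.range a) → x ∈ Ideal.span (Set.range a)) :
    HasKoszulSyzygies (Fin.snoc a r : Fin (n + 1) → A) A := by
  intro g hg
  simp only [Fin.sum_univ_castSucc, Fin.snoc_castSucc, Fin.snoc_last, smul_eq_mul] at hg
  have last_mem : g (Fin.last n) ∈ Ideal.span (Set.range a) := by
    refine hr _ (Ideal.mem_span_range_iff_exists_fun.mpr ⟨fun i ↦ -g i.castSucc, ?_⟩)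
    simp only [neg_mul, Finset.sum_neg_distrib, mul_comm (g _)]
    linear_combination -hg
  obtain ⟨h, h_last⟩ := Ideal.mem_span_range_iff_exists_fun.mp last_mem
  -- Substituting `g (last n) = ∑ i, h i * a i` turns `g` into a syzygy of `a` alone.
  have init_syzygy : ∑ i, a i • (g i.castSucc + h i * r) = 0 := by
    rw [← hg, ← h_last, Finset.mul_sum, ← Finset.sum_add_distrib]
    exact Finset.sum_congr rfl fun i _ ↦ by rw [smul_eq_mul]; ring
  obtain ⟨c, hc⟩ := ha _ init_syzygy
  refine ⟨Fin.snoc (fun i ↦ Fin.snoc (c i) 0) (Fin.snoc h 0), fun i ↦ ?_⟩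
  cases i using Fin.lastCases with
  | last => simp [Fin.sum_univ_castSucc, ← h_last, mul_comm]
  | cast i =>
    simp only [Fin.sum_univ_castSucc, Fin.snoc_castSucc, Fin.snoc_last, smul_eq_mul, zero_sub,
      mul_neg]
    linear_combination hc i

theorem hasKoszulSyzygies_of_regular_mod_prev {n : ℕ} {a : Fin n → A}
    (ha : ∀ i x, x * a i ∈ Ideal.span (a '' Set.Iio i) → x ∈ Ideal.span (a '' Set.Iio i)) :
    HasKoszulSyzygies a A := by
  induction a using Fin.snocInduction with
  | elim0 => exact fun _ _ ↦ ⟨0, fun i ↦ i.elim0⟩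
  | @snoc n a r ih =>
    have image_Iio_castSucc (i : Fin n) :
        (Fin.snoc a r : Fin (n + 1) → A) '' Set.Iio i.castSucc = a '' Set.Iio i := by
      simp only [← Fin.image_castSucc_Iio, Set.image_image, Fin.snoc_castSucc]
    have image_Iio_last :
        (Fin.snoc a r : Fin (n + 1) → A) '' Set.Iio (Fin.last n) = Set.range a := by
      have Iio_last : Set.Iio (Fin.last n) = Set.range Fin.castSucc := Fin.range_castSucc.symm
      rw [Iio_last, ← Set.range_comp, Fin.snoc_comp_castSucc]
    refine (ih fun i ↦ ?_).snoc ?_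
    · simpa only [image_Iio_castSucc, Fin.snoc_castSucc] using ha i.castSucc
    · simpa only [image_Iio_last, Fin.snoc_last] using ha (Fin.last n)

end KoszulSyzygies

section PolynomialRing

open MvPolynomial

section Degree

variable {σ R : Type*} [CommSemiring R] {N : ℕ}

theorem pderiv_comm (i j : σ) (p : MvPolynomial σ R) :
    pderiv i (pderiv j p) = pderiv j (pderiv i p) := by
  obtain rfl | hij := eq_or_ne i j
  · rfl
  ext m
  simp only [coeff_pderiv, Finsupp.add_apply, Finsupp.single_eq_of_ne hij,
    Finsupp.single_eq_of_ne hij.symm, add_zero, add_right_comm m, mul_right_comm]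

theorem totalDegree_le_iff_coeff_eq_zero {p : MvPolynomial σ R} :
    p.totalDegree ≤ N ↔ ∀ m : σ →₀ ℕ, N < m.degree → p.coeff m = 0 := by
  refine ⟨fun hp m hm ↦ coeff_eq_zero_of_totalDegree_lt (hp.trans_lt hm), fun hp ↦ ?_⟩
  refine (mem_restrictTotalDegree σ N p).mp fun m hm ↦ ?_
  exact le_of_not_gt fun hlt ↦ mem_support_iff.mp hm (hp m hlt)

theorem totalDegree_le_of_homogeneousComponent_succ_eq_zero {p : MvPolynomial σ R}
    (hp : p.totalDegree ≤ N + 1) (h : homogeneousComponent (N + 1) p = 0) :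
    p.totalDegree ≤ N := by
  refine totalDegree_le_iff_coeff_eq_zero.mpr fun m hm ↦ ?_
  obtain hm_eq | hm_lt := (Nat.succ_le_of_lt hm).eq_or_lt'
  · simpa [coeff_homogeneousComponent, hm_eq] using congrArg (coeff m) h
  · exact totalDegree_le_iff_coeff_eq_zero.mp hp m hm_lt

theorem coeff_pderiv_eq_zero_of_totalDegree_le (i : σ) {p : MvPolynomial σ R}
    (hp : p.totalDegree ≤ N) {m : σ →₀ ℕ} (hm : N ≤ m.degree) : (pderiv i p).coeff m = 0 := by
  have lt_degree : N < (m + Finsupp.single i 1).degree := by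
    simpa [Nat.lt_succ_iff] using hm
  rw [coeff_pderiv, totalDegree_le_iff_coeff_eq_zero.mp hp _ lt_degree, zero_mul]

end Degree

variable {σ A : Type*} [CommRing A] {a : σ → A} {N d : ℕ}

/-- The operator `∂ᵢ - aᵢ` on `A[x]`, as an `A`-linear map; the ranges of these maps
span `ImD`. -/
noncomputable def twistedPDeriv (a : σ → A) (i : σ) : Module.End A (MvPolynomial σ A) :=
  (pderiv i).toLinearMap - a i • LinearMap.id

theorem twistedPDeriv_apply (i : σ) (p : MvPolynomial σ A) :
    twistedPDeriv a i p = pderiv i p - a i • p :=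
  rfl

theorem twistedPDeriv_comm (i j : σ) (p : MvPolynomial σ A) :
    twistedPDeriv a i (twistedPDeriv a j p) = twistedPDeriv a j (twistedPDeriv a i p) := by
  simp only [twistedPDeriv_apply, map_sub, Derivation.map_smul, pderiv_comm i j,
    smul_comm (a i) (a j)]
  abel

theorem totalDegree_twistedPDeriv_le (i : σ) (p : MvPolynomial σ A) :
    (twistedPDeriv a i p).totalDegree ≤ p.totalDegree := by
  have pderiv_le : (pderiv i p).totalDegree ≤ p.totalDegree :=
    totalDegree_le_iff_coeff_eq_zero.mpr fun _ hm ↦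
      coeff_pderiv_eq_zero_of_totalDegree_le i le_rfl hm.le
  exact (totalDegree_sub _ _).trans (max_le pderiv_le (totalDegree_smul_le _ _))

theorem homogeneousComponent_twistedPDeriv (i : σ) {p : MvPolynomial σ A}
    (hp : p.totalDegree ≤ N) :
    homogeneousComponent N (twistedPDeriv a i p) = -(a i • homogeneousComponent N p) := by
  have pderiv_eq_zero : homogeneousComponent N (pderiv i p) = 0 := by
    ext m
    rw [coeff_homogeneousComponent, coeff_zero]
    exact ite_eq_right_iff.mpr fun hm ↦ coeff_pderiv_eq_zero_of_totalDegree_le i hp hm.ge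
  rw [twistedPDeriv_apply, map_sub, map_smul, pderiv_eq_zero, zero_sub]

variable [Fintype σ]

theorem homogeneousComponent_sum_twistedPDeriv {g : σ → MvPolynomial σ A}
    (hg : ∀ i, (g i).totalDegree ≤ N) :
    homogeneousComponent N (∑ i, twistedPDeriv a i (g i)) =
      -∑ i, a i • homogeneousComponent N (g i) := by
  rw [map_sum, ← Finset.sum_neg_distrib]
  exact Finset.sum_congr rfl fun i _ ↦ homogeneousComponent_twistedPDeriv i (hg i)

theorem sum_twistedPDeriv_sum_twistedPDeriv_sub_swap (c : σ → σ → MvPolynomial σ A) :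
    ∑ i, twistedPDeriv a i (∑ j, twistedPDeriv a j (c i j - c j i)) = 0 := by
  simp only [map_sum, map_sub, Finset.sum_sub_distrib]
  rw [sub_eq_zero, Finset.sum_comm]
  exact Finset.sum_congr rfl fun i _ ↦ Finset.sum_congr rfl fun j _ ↦ twistedPDeriv_comm _ _ _

theorem HasKoszulSyzygies.exists_isHomogeneous (ha : HasKoszulSyzygies a A)
    {f : σ → MvPolynomial σ A} (hf : ∀ i, (f i).IsHomogeneous N) (hf_sum : ∑ i, a i • f i = 0) :
    ∃ c : σ → σ → MvPolynomial σ A, (∀ i j, (c i j).IsHomogeneous N) ∧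
      ∀ i, f i = ∑ j, a j • (c i j - c j i) := by
  obtain ⟨c, hc⟩ := ha.of_flat f hf_sum
  refine ⟨fun i j ↦ homogeneousComponent N (c i j),
    fun i j ↦ homogeneousComponent_isHomogeneous N _, fun i ↦ ?_⟩
  rw [← homogeneousComponent_eq_self (hf i), hc i]
  simp only [map_sum, map_smul, map_sub]

theorem HasKoszulSyzygies.exists_totalDegree_le_of_succ (ha : HasKoszulSyzygies a A)
    {g : σ → MvPolynomial σ A} (hg : ∀ i, (g i).totalDegree ≤ N + 1)
    (hsum : (∑ i, twistedPDeriv a i (g i)).totalDegree ≤ N) :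
    ∃ g' : σ → MvPolynomial σ A,
      ∑ i, twistedPDeriv a i (g' i) = ∑ i, twistedPDeriv a i (g i) ∧
        ∀ i, (g' i).totalDegree ≤ N := by
  have top_syzygy : ∑ i, a i • homogeneousComponent (N + 1) (g i) = 0 := by
    rw [← neg_eq_zero, ← homogeneousComponent_sum_twistedPDeriv hg]
    exact homogeneousComponent_eq_zero _ _ (Nat.lt_succ_of_le hsum)
  obtain ⟨c, hc, hgc⟩ :=
    ha.exists_isHomogeneous (fun i ↦ homogeneousComponent_isHomogeneous _ (g i)) top_syzygy
  have skew_le (i j : σ) : (c i j - c j i).totalDegree ≤ N + 1 :=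
    ((hc i j).sub (hc j i)).totalDegree_le
  have correction_le (i : σ) :
      (∑ j, twistedPDeriv a j (c i j - c j i)).totalDegree ≤ N + 1 :=
    totalDegree_finsetSum_le fun j _ ↦ (totalDegree_twistedPDeriv_le j _).trans (skew_le i j)
  refine ⟨fun i ↦ g i + ∑ j, twistedPDeriv a j (c i j - c j i), ?_, fun i ↦ ?_⟩
  · simp only [map_add, Finset.sum_add_distrib, sum_twistedPDeriv_sum_twistedPDeriv_sub_swap,
      add_zero]
  · refine totalDegree_le_of_homogeneousComponent_succ_eq_zero
      ((totalDegree_add _ _).trans (max_le (hg i) (correction_le i))) ?_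
    rw [map_add, homogeneousComponent_sum_twistedPDeriv (skew_le i), hgc i]
    simp only [homogeneousComponent_eq_self ((hc i _).sub (hc _ i)), add_neg_cancel]

theorem HasKoszulSyzygies.exists_totalDegree_le (ha : HasKoszulSyzygies a A)
    (g : σ → MvPolynomial σ A) (hsum : (∑ i, twistedPDeriv a i (g i)).totalDegree ≤ d) :
    ∃ g' : σ → MvPolynomial σ A,
      ∑ i, twistedPDeriv a i (g' i) = ∑ i, twistedPDeriv a i (g i) ∧
        ∀ i, (g' i).totalDegree ≤ d := by
  obtain ⟨N, hN⟩ : ∃ N, ∀ i, (g i).totalDegree ≤ d + N :=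
    ⟨∑ i, (g i).totalDegree, fun i ↦ le_add_left <|
      Finset.single_le_sum_of_canonicallyOrdered (f := fun i ↦ (g i).totalDegree)
        (Finset.mem_univ i)⟩
  induction N generalizing g with
  | zero => exact ⟨g, rfl, hN⟩
  | succ N ih =>
    obtain ⟨g₁, hg₁_sum, hg₁⟩ :=
      ha.exists_totalDegree_le_of_succ hN (hsum.trans (Nat.le_add_right d N))
    obtain ⟨g₂, hg₂_sum, hg₂⟩ := ih g₁ (hg₁_sum ▸ hsum) hg₁
    exact ⟨g₂, hg₂_sum.trans hg₁_sum, hg₂⟩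

theorem stmt_16_general (ha : HasKoszulSyzygies a A) {b : MvPolynomial σ A}
    (hd : b.totalDegree ≤ d)
    (hb : ∃ g : σ → MvPolynomial σ A, b = ∑ i, (pderiv i (g i) - C (a i) * g i)) (m : σ →₀ ℕ) :
    (homogeneousComponent d b).coeff m ∈ Ideal.span (Set.range a) := by
  obtain ⟨g, rfl⟩ := hb
  simp only [← smul_eq_C_mul, ← twistedPDeriv_apply] at hd ⊢
  obtain ⟨g', hg'_sum, hg'⟩ := ha.exists_totalDegree_le g hd
  rw [← hg'_sum, homogeneousComponent_sum_twistedPDeriv hg', coeff_neg, coeff_sum]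
  refine neg_mem (sum_mem fun i _ ↦ ?_)
  rw [coeff_smul]
  exact Ideal.mul_mem_right _ _ (Ideal.subset_span ⟨i, rfl⟩)

end PolynomialRing

/-- Crucial lemma: if `b ∈ ImD` has total degree `d`, then every coefficient of the
degree-`d` homogeneous component of `b` lies in the ideal generated by `a₁,…,aₙ`. -/
theorem stmt_16 {k A : Type*} [Field k] [CommRing A] [Algebra k A] {n : ℕ}
    (a : Fin n → A) (ha : IsRegSeq a)
    (b : MvPolynomial (Fin n) A) (d : ℕ) (hd : b.totalDegree = d)
    (hb : b ∈ ImD a) :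
    ∀ m : Fin n →₀ ℕ,
      (MvPolynomial.homogeneousComponent d b).coeff m ∈ Ideal.span (Set.range a) :=
  stmt_16_general (hasKoszulSyzygies_of_regular_mod_prev ha.1) hd.le hb
end

section
/- Let k be a field of characteristic p > 0, A a commutative k-algebra, a_1,…,a_n ∈ A a regular sequence in A, and ImD = Σ_{i=1}^n (∂_{x_i} − a_i)·A[x_1,…,x_n]. If f ∈ A[x_1,…,x_n] satisfies f^p ∈ ImD, then for every g ∈ A[x_1,…,x_n] and every m ≥ p² one has g·f^m ∈ ImD. -/
/-!
The partial derivatives `∂ᵢ` commute and satisfy `∂ᵢ ^ p = 0`, so `∂ᵢ - aᵢ` has the cofactor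
`φᵢ = ∑ j < p, ∂ᵢ ^ j aᵢ ^ (p - 1 - j)`, with `(∂ᵢ - aᵢ) φᵢ = -aᵢ ^ p`; hence
`(a₁ ^ p, …, aₙ ^ p) A[x] ⊆ ImD`. All derivatives of `f ^ p` vanish, so `φᵢ` multiplies it by
`aᵢ ^ (p - 1)`, and applying `φ₁ ⋯ φₙ` to `f ^ p ∈ ImD` gives
`(a₁ ⋯ aₙ) ^ (p - 1) f ^ p ∈ (a₁ ^ p, …, aₙ ^ p) A[x]`. As the sequence is regular, this forces
`f ^ p ∈ (a₁, …, aₙ) A[x]`, and the Frobenius map gives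
`f ^ p ^ 2 ∈ (a₁ ^ p, …, aₙ ^ p) A[x] ⊆ ImD`.
-/

section WeaklyRegular

variable {A ι : Type*} [CommRing A]

theorem isSMulRegular_quotient_sup_span_singleton_swap {I : Ideal A} {a b : A}
    (ha : IsSMulRegular (A ⧸ I) a) (hb : IsSMulRegular (A ⧸ Ideal.span {a} ⊔ I) b) :
    IsSMulRegular (A ⧸ Ideal.span {b} ⊔ I) a := by
  simp only [isSMulRegular_quotient_iff_mem_of_smul_mem, smul_eq_mul,
    Ideal.mem_span_singleton_sup] at *
  rintro x ⟨y, z, hz, hx⟩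
  obtain ⟨w, v, hv, rfl⟩ := hb y ⟨x, -z, neg_mem hz, by linear_combination -hx⟩
  have hmem : a * (x - w * b) ∈ I := by
    rw [show a * (x - w * b) = b * v + z by linear_combination -hx]
    exact add_mem (I.mul_mem_left b hv) hz
  exact ⟨w, _, ha _ hmem, by ring⟩

theorem isSMulRegular_quotient_sup_span_singleton_pow {I : Ideal A} {a b : A}
    (ha : IsSMulRegular (A ⧸ I) a) (hb : IsSMulRegular (A ⧸ Ideal.span {a} ⊔ I) b) (e : ℕ) :
    IsSMulRegular (A ⧸ Ideal.span {a ^ e} ⊔ I) b := by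
  simp only [isSMulRegular_quotient_iff_mem_of_smul_mem, smul_eq_mul,
    Ideal.mem_span_singleton_sup] at *
  induction e with
  | zero => exact fun x _ ↦ ⟨x, 0, zero_mem I, by ring⟩
  | succ e ih =>
    rintro x ⟨y, z, hz, hx⟩
    obtain ⟨w, v, hv, rfl⟩ := hb x ⟨y * a ^ e, z, hz, by linear_combination hx⟩
    have hmem : a * (b * w - y * a ^ e) ∈ I := by
      rw [show a * (b * w - y * a ^ e) = z - b * v by linear_combination -hx]
      exact sub_mem hz (I.mul_mem_left b hv)
    obtain ⟨u, q, hq, rfl⟩ := ih w ⟨y, _, ha _ hmem, by ring⟩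
    exact ⟨u, q * a + v, add_mem (I.mul_mem_right a hq) hv, by ring⟩

theorem Iio_eq_of_isLowerSet_insert [Preorder ι] {m : ι} {s : Set ι}
    (hs : IsLowerSet (insert m s)) (hm : ∀ i ∈ s, i < m) : Set.Iio m = s :=
  Set.Subset.antisymm
    (fun _ hi ↦ (hs hi.le (Set.mem_insert m s)).resolve_left hi.ne) hm

theorem image_update_of_notMem {β : Type*} [DecidableEq ι] {s : Set ι} {i : ι} (hi : i ∉ s)
    (f : ι → β) (b : β) : Function.update f i b '' s = f '' s :=
  Set.image_congr fun _ hj ↦ Function.update_of_ne (ne_of_mem_of_not_mem hj hi) b f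

/-- A family indexed by a linear order is weakly regular if each of its members acts injectively
modulo the ideal generated by the previous ones. This is `IsRegSeq` without properness, and
`RingTheory.Sequence.IsWeaklyRegular` for families in place of lists. -/
def IsWeaklyRegularFamily [LinearOrder ι] (a : ι → A) : Prop :=
  ∀ i, IsSMulRegular (A ⧸ Ideal.span (a '' Set.Iio i)) (a i)

theorem IsRegSeq.isWeaklyRegularFamily {n : ℕ} {a : Fin n → A} (ha : IsRegSeq a) :
    IsWeaklyRegularFamily a := fun i ↦
  (isSMulRegular_quotient_iff_mem_of_smul_mem _ _).2 fun x hx ↦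
    ha.1 i x (by rwa [mul_comm])

namespace IsWeaklyRegularFamily

variable [LinearOrder ι] [Finite ι] {a : ι → A}

theorem isSMulRegular_of_isLowerSet (ha : IsWeaklyRegularFamily a) {s : Set ι} (hs : IsLowerSet s)
    {i : ι} (hi : i ∈ s) : IsSMulRegular (A ⧸ Ideal.span (a '' (s \ {i}))) (a i) := by
  lift s to Finset ι using s.toFinite
  induction s using Finset.induction_on_max with
  | empty => simp at hi
  | insert m s hm ih =>
    rw [Finset.coe_insert] at hs hi ⊢
    have hIio : Set.Iio m = s := Iio_eq_of_isLowerSet_insert hs hm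
    rcases eq_or_ne i m with rfl | him
    · rw [Set.insert_sdiff_self_of_notMem fun h ↦ (hm i h).false, ← hIio]
      exact ha i
    · have his : i ∈ (s : Set ι) := hi.resolve_left him
      rw [Set.insert_sdiff_of_notMem _ (by simpa using him.symm), Set.image_insert_eq,
        Ideal.span_insert]
      refine isSMulRegular_quotient_sup_span_singleton_swap (ih (hIio ▸ isLowerSet_Iio m) his) ?_
      rw [← Ideal.span_insert, ← Set.image_insert_eq, Set.insert_sdiff_self_of_mem his, ← hIio]
      exact ha m

theorem update_pow (ha : IsWeaklyRegularFamily a) (i : ι) (e : ℕ) :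
    IsWeaklyRegularFamily (Function.update a i (a i ^ e)) := by
  intro j
  rcases lt_trichotomy j i with hji | rfl | hij
  · rw [image_update_of_notMem (by simpa using hji.le), Function.update_of_ne hji.ne]
    exact ha j
  · rw [image_update_of_notMem (by simp), Function.update_self]
    exact (ha j).pow e
  · have hIio : Set.Iio j = insert i (Set.Iio j \ {i}) :=
      (Set.insert_sdiff_self_of_mem (Set.mem_Iio.2 hij)).symm
    rw [Function.update_of_ne hij.ne', hIio, Set.image_insert_eq, Function.update_self,
      image_update_of_notMem (by simp), Ideal.span_insert]
    refine isSMulRegular_quotient_sup_span_singleton_pow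
      (ha.isSMulRegular_of_isLowerSet (isLowerSet_Iio j) hij) ?_ e
    rw [← Ideal.span_insert, ← Set.image_insert_eq, ← hIio]
    exact ha j

theorem piecewise_pow (ha : IsWeaklyRegularFamily a) (s : Finset ι) (e : ι → ℕ) :
    IsWeaklyRegularFamily (s.piecewise (fun i ↦ a i ^ e i) a) := by
  induction s using Finset.induction_on with
  | empty => rwa [Finset.piecewise_empty]
  | insert i s hi ih =>
    have := ih.update_pow i (e i)
    rwa [Finset.piecewise_eq_of_notMem _ _ _ hi, ← Finset.piecewise_insert] at this

theorem mem_span_range_of_pow_mul_mem (ha : IsWeaklyRegularFamily a) {i : ι} {e : ℕ} {x : A}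
    (hx : a i ^ e * x ∈ Ideal.span (Set.range (Function.update a i (a i ^ (e + 1))))) :
    x ∈ Ideal.span (Set.range a) := by
  have hreg := ((isSMulRegular_quotient_iff_mem_of_smul_mem _ _).1
    ((ha.isSMulRegular_of_isLowerSet isLowerSet_univ (Set.mem_univ i)).pow e))
  have hrange (b : ι → A) : Set.range b = insert (b i) (b '' (Set.univ \ {i})) := by
    rw [← Set.image_insert_eq, Set.insert_sdiff_self_of_mem (Set.mem_univ i), Set.image_univ]
  rw [hrange, Ideal.span_insert, Ideal.mem_span_singleton_sup] at hx ⊢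
  rw [Function.update_self, image_update_of_notMem (by simp)] at hx
  obtain ⟨y, z, hz, hxy⟩ := hx
  refine ⟨y, _, hreg (x - y * a i) ?_, by ring⟩
  rwa [smul_eq_mul, show a i ^ e * (x - y * a i) = z by linear_combination -hxy]

end IsWeaklyRegularFamily

theorem IsWeaklyRegularFamily.mem_span_range_of_prod_pow_mul_mem [LinearOrder ι] [Fintype ι]
    {a : ι → A} (ha : IsWeaklyRegularFamily a) (e : ι → ℕ) {x : A}
    (hx : (∏ i, a i ^ e i) * x ∈ Ideal.span (Set.range fun i ↦ a i ^ (e i + 1))) :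
    x ∈ Ideal.span (Set.range a) := by
  suffices h : ∀ (s : Finset ι) (x : A), (∏ i ∈ s, a i ^ e i) * x ∈
      Ideal.span (Set.range (s.piecewise (fun i ↦ a i ^ (e i + 1)) a)) →
      x ∈ Ideal.span (Set.range a) from
    h Finset.univ x (by rwa [Finset.piecewise_univ])
  intro s
  induction s using Finset.induction_on with
  | empty => simp
  | insert i s hi ih =>
    intro x hx
    refine ih x ((ha.piecewise_pow s fun i ↦ e i + 1).mem_span_range_of_pow_mul_mem
      (i := i) (e := e i) ?_)
    rw [Finset.prod_insert hi, mul_assoc, Finset.piecewise_insert] at hx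
    rwa [Finset.piecewise_eq_of_notMem _ _ _ hi]

end WeaklyRegular

section CommutingNilpotents

variable {A M ι : Type*} [CommRing A] [AddCommGroup M] [Module A M]

theorem iSup_range_algebraMap_end (b : ι → A) :
    ⨆ i, LinearMap.range (algebraMap A (Module.End A M) (b i)) =
      Ideal.span (Set.range b) • (⊤ : Submodule A M) := by
  rw [Ideal.span, Submodule.span_range_eq_iSup, Submodule.iSup_smul]
  refine iSup_congr fun i ↦ ?_
  rw [← Ideal.span, Submodule.ideal_span_singleton_smul]
  ext x
  simp [Submodule.mem_smul_pointwise_iff_exists]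

/-- The cofactor `∑ j ≤ e, T ^ j c ^ (e - j)` of `T - c` in `T ^ (e + 1) - c ^ (e + 1)`. -/
def shiftCofactor (T : Module.End A M) (c : A) (e : ℕ) : Module.End A M :=
  ∑ j ∈ Finset.range (e + 1), T ^ j * algebraMap A (Module.End A M) c ^ (e - j)

theorem commute_shiftCofactor {S T : Module.End A M} (h : Commute S T) (c : A) (e : ℕ) :
    Commute S (shiftCofactor T c e) :=
  Commute.sum_right _ _ _ fun j _ ↦
    (h.pow_right j).mul_right ((Algebra.commute_algebraMap_right c S).pow_right _)

theorem sub_mul_shiftCofactor {T : Module.End A M} {e : ℕ} (hT : T ^ (e + 1) = 0) (c : A) :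
    (T - algebraMap A _ c) * shiftCofactor T c e = -algebraMap A _ (c ^ (e + 1)) := by
  rw [map_pow, ← zero_sub, ← hT, ← (Algebra.commute_algebraMap_right c T).mul_geom_sum₂ (e + 1)]
  rfl

theorem shiftCofactor_apply_of_apply_eq_zero {T : Module.End A M} {h : M} (hT : T h = 0) (c : A)
    (e : ℕ) : shiftCofactor T c e h = c ^ e • h := by
  rw [shiftCofactor, LinearMap.sum_apply, Finset.sum_eq_single_of_mem 0 (by simp)]
  · simp [← map_pow]
  · intro j _ hj
    rw [← map_pow, ← Algebra.commutes, Module.End.mul_apply,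
      ← Nat.succ_pred_eq_of_ne_zero hj, pow_succ, Module.End.mul_apply, hT, map_zero, map_zero]

/-- The submodule `∑ i, (T i - a i) M`; for `T i = ∂ / ∂ xᵢ` on polynomials it is `ImD a`. -/
def shiftImage (T : ι → Module.End A M) (a : ι → A) : Submodule A M :=
  ⨆ i, LinearMap.range (T i - algebraMap A (Module.End A M) (a i))

theorem mem_shiftImage [Fintype ι] {T : ι → Module.End A M} {a : ι → A} {h : M} :
    h ∈ shiftImage T a ↔ ∃ g : ι → M, h = ∑ i, (T i (g i) - a i • g i) := by
  constructor
  · intro hh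
    obtain ⟨f, hf, rfl⟩ := (Submodule.mem_iSup_iff_exists_finsupp _ _).1 hh
    choose g hg using hf
    refine ⟨g, ?_⟩
    simp [Finsupp.sum_fintype, ← hg]
  · rintro ⟨g, rfl⟩
    exact Submodule.sum_mem_iSup fun i ↦ ⟨g i, by simp⟩

theorem span_range_pow_smul_top_le_shiftImage {T : ι → Module.End A M} {e : ι → ℕ}
    (hT : ∀ i, T i ^ (e i + 1) = 0) (a : ι → A) :
    Ideal.span (Set.range fun i ↦ a i ^ (e i + 1)) • ⊤ ≤ shiftImage T a := by
  rw [← iSup_range_algebraMap_end]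
  refine iSup_mono fun i ↦ ?_
  rw [← LinearMap.range_neg, ← sub_mul_shiftCofactor (hT i)]
  exact LinearMap.range_comp_le_range _ _

theorem map_shiftCofactor_iSup_range_piecewise_le [DecidableEq ι] {T : ι → Module.End A M}
    (hcomm : ∀ i j, Commute (T i) (T j)) {e : ι → ℕ} {j : ι} (hT : T j ^ (e j + 1) = 0)
    (a : ι → A) {s : Finset ι} (hj : j ∉ s) :
    (⨆ i, LinearMap.range (s.piecewise (fun i ↦ algebraMap A (Module.End A M) (a i ^ (e i + 1)))
        (fun i ↦ T i - algebraMap A _ (a i)) i)).map (shiftCofactor (T j) (a j) (e j)) ≤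
      ⨆ i, LinearMap.range ((insert j s).piecewise
        (fun i ↦ algebraMap A (Module.End A M) (a i ^ (e i + 1)))
        (fun i ↦ T i - algebraMap A _ (a i)) i) := by
  have hshift (i : ι) : Commute (T i - algebraMap A _ (a i)) (shiftCofactor (T j) (a j) (e j)) :=
    commute_shiftCofactor ((hcomm i j).sub_left (Algebra.commute_algebraMap_left _ _)) _ _
  rw [Submodule.map_iSup]
  refine iSup_mono fun i ↦ ?_
  rw [← LinearMap.range_comp, ← Module.End.mul_eq_comp]
  rcases eq_or_ne i j with rfl | hij
  · rw [Finset.piecewise_eq_of_notMem _ _ _ hj, ← (hshift i).eq, sub_mul_shiftCofactor hT,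
      LinearMap.range_neg, Finset.piecewise_insert_self]
  · rw [Finset.piecewise_insert_of_ne _ _ _ hij]
    suffices hentry : Commute (s.piecewise (fun i ↦ algebraMap A _ (a i ^ (e i + 1)))
        (fun i ↦ T i - algebraMap A _ (a i)) i) (shiftCofactor (T j) (a j) (e j)) by
      rw [← hentry.eq]
      exact LinearMap.range_comp_le_range _ _
    rw [Finset.piecewise]
    split_ifs
    · exact Algebra.commute_algebraMap_left _ _
    · exact hshift i

theorem prod_pow_smul_mem_span_range_pow_smul_top [Fintype ι] {T : ι → Module.End A M}
    {e : ι → ℕ} (hcomm : ∀ i j, Commute (T i) (T j)) (hT : ∀ i, T i ^ (e i + 1) = 0) {a : ι → A}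
    {h : M} (hconst : ∀ i, T i h = 0) (hmem : h ∈ shiftImage T a) :
    (∏ i, a i ^ e i) • h ∈
      Ideal.span (Set.range fun i ↦ a i ^ (e i + 1)) • (⊤ : Submodule A M) := by
  classical
  rw [← iSup_range_algebraMap_end]
  suffices hs : ∀ s : Finset ι, (∏ i ∈ s, a i ^ e i) • h ∈ ⨆ i, LinearMap.range
      (s.piecewise (fun i ↦ algebraMap A (Module.End A M) (a i ^ (e i + 1)))
        (fun i ↦ T i - algebraMap A _ (a i)) i) by
    simpa only [Finset.piecewise_univ] using hs Finset.univ
  intro s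
  induction s using Finset.induction_on with
  | empty => simpa [shiftImage] using hmem
  | insert j s hj ih =>
    have hmap := map_shiftCofactor_iSup_range_piecewise_le hcomm (hT j) a hj
      (Submodule.mem_map_of_mem ih)
    rwa [map_smul, shiftCofactor_apply_of_apply_eq_zero (hconst j), smul_smul, mul_comm,
      ← Finset.prod_insert (f := fun i ↦ a i ^ e i) hj] at hmap

end CommutingNilpotents

section PartialDerivatives

open MvPolynomial

variable {A σ : Type*} [CommRing A]

theorem commute_pderiv (i j : σ) :
    Commute (pderiv (R := A) i).toLinearMap (pderiv j).toLinearMap := by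
  have h : ⁅(pderiv i : Derivation A (MvPolynomial σ A) (MvPolynomial σ A)), pderiv j⁆ = 0 :=
    derivation_ext fun k ↦ by
      classical
      rw [Derivation.commutator_apply]
      simp [pderiv_X, Pi.single_apply, apply_ite]
  rw [commute_iff_lie_eq, ← Derivation.commutator_coe_linear_map, h, Derivation.coe_zero_linearMap]

theorem coeff_toLinearMap_pderiv_pow {R : Type*} [CommSemiring R] (i : σ) (k : ℕ)
    (f : MvPolynomial σ R) (m : σ →₀ ℕ) :
    coeff m (((pderiv i).toLinearMap ^ k) f) =
      coeff (m + Finsupp.single i k) f * ((m i + 1).ascFactorial k : ℕ) := by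
  induction k generalizing m with
  | zero => simp
  | succ k ih =>
    rw [pow_succ', Module.End.mul_apply, Derivation.coeFn_coe, coeff_pderiv, ih,
      add_assoc, ← Finsupp.single_add, add_comm 1 k, Nat.ascFactorial_succ, ← Nat.succ_ascFactorial]
    simp only [Finsupp.add_apply, Finsupp.single_eq_same]
    push_cast
    ring

theorem toLinearMap_pderiv_pow_char {R : Type*} [CommSemiring R] (p : ℕ) [NeZero p] [CharP R p]
    (i : σ) : (pderiv (R := R) i).toLinearMap ^ p = 0 := by
  refine LinearMap.ext fun f ↦ MvPolynomial.ext _ _ fun m ↦ ?_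
  have hdvd : p ∣ (m i + 1).ascFactorial p :=
    (Nat.dvd_factorial (NeZero.pos p) le_rfl).trans (Nat.factorial_dvd_ascFactorial _ _)
  rw [coeff_toLinearMap_pderiv_pow, (CharP.cast_eq_zero_iff R p _).2 hdvd, mul_zero,
    LinearMap.zero_apply, coeff_zero]

theorem mem_ImD_iff_mem_shiftImage {n : ℕ} {a : Fin n → A} {h : MvPolynomial (Fin n) A} :
    h ∈ ImD a ↔ h ∈ shiftImage (fun i ↦ (pderiv i).toLinearMap) a := by
  simp only [ImD, Set.mem_ofPred_eq, mem_shiftImage, smul_eq_C_mul, Derivation.coeFn_coe]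

theorem mem_ImD_of_mem_map_C_span_range_pow_char (p : ℕ) [NeZero p] [CharP A p] {n : ℕ}
    {a : Fin n → A} {h : MvPolynomial (Fin n) A}
    (hh : h ∈ (Ideal.span (Set.range fun i ↦ a i ^ p)).map C) :
    h ∈ ImD a := by
  obtain ⟨e, rfl⟩ := Nat.exists_eq_add_one_of_ne_zero (NeZero.ne p)
  rw [mem_ImD_iff_mem_shiftImage]
  refine span_range_pow_smul_top_le_shiftImage (e := fun _ ↦ e)
    (fun i ↦ toLinearMap_pderiv_pow_char _ i) a ?_
  rwa [Ideal.smul_top_eq_map]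

theorem mem_map_C_span_range_of_mem_ImD (p : ℕ) [NeZero p] [CharP A p] {n : ℕ}
    {a : Fin n → A} (ha : IsWeaklyRegularFamily a) {h : MvPolynomial (Fin n) A}
    (hconst : ∀ i, pderiv i h = 0) (hh : h ∈ ImD a) :
    h ∈ (Ideal.span (Set.range a)).map C := by
  obtain ⟨e, rfl⟩ := Nat.exists_eq_add_one_of_ne_zero (NeZero.ne p)
  have hprod := prod_pow_smul_mem_span_range_pow_smul_top (e := fun _ ↦ e) commute_pderiv
    (fun i ↦ toLinearMap_pderiv_pow_char _ i) hconst (mem_ImD_iff_mem_shiftImage.1 hh)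
  rw [Ideal.smul_top_eq_map, Submodule.restrictScalars_mem, algebraMap_eq, mem_map_C_iff] at hprod
  rw [mem_map_C_iff]
  intro m
  refine ha.mem_span_range_of_prod_pow_mul_mem (fun _ ↦ e) ?_
  simpa using hprod m

end PartialDerivatives

theorem pow_char_mem_map_map_frobenius {A B : Type*} [CommSemiring A] [CommSemiring B] (p : ℕ)
    [ExpChar A p] [ExpChar B p] (φ : A →+* B) {I : Ideal A} {x : B} (hx : x ∈ I.map φ) :
    x ^ p ∈ (I.map (frobenius A p)).map φ := by
  rw [Ideal.map_map, φ.frobenius_comm, ← Ideal.map_map]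
  exact Ideal.mem_map_of_mem (frobenius B p) hx

/-- In characteristic `p > 0`, if `f^p ∈ ImD` then `g·f^m ∈ ImD` for every polynomial `g`
and every `m ≥ p²`. -/
theorem stmt_18 {k A : Type*} [Field k] [CommRing A] [Algebra k A]
    (p : ℕ) (hp : p.Prime) [CharP k p] {n : ℕ} (a : Fin n → A) (ha : IsRegSeq a)
    (f : MvPolynomial (Fin n) A) (hf : f ^ p ∈ ImD a) :
    ∀ g : MvPolynomial (Fin n) A, ∀ m : ℕ, p ^ 2 ≤ m → g * f ^ m ∈ ImD a := by
  intro g m hm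
  have : Fact p.Prime := ⟨hp⟩
  have : Nontrivial A :=
    not_subsingleton_iff_nontrivial.1 fun _ ↦ ha.2 (Subsingleton.elim _ _)
  have : CharP A p := charP_of_injective_algebraMap (algebraMap k A).injective p
  have hconst (i : Fin n) : MvPolynomial.pderiv i (f ^ p) = 0 := by simp
  have hmem : f ^ p ∈ (Ideal.span (Set.range a)).map MvPolynomial.C :=
    mem_map_C_span_range_of_mem_ImD p ha.isWeaklyRegularFamily hconst hf
  have hmem_pow : (f ^ p) ^ p ∈ (Ideal.span (Set.range fun i ↦ a i ^ p)).map MvPolynomial.C := by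
    have := pow_char_mem_map_map_frobenius p _ hmem
    rwa [Ideal.map_span, ← Set.range_comp] at this
  apply mem_ImD_of_mem_map_C_span_range_pow_char p
  rw [← Nat.sub_add_cancel hm, pow_add, ← mul_assoc, sq, pow_mul]
  exact Ideal.mul_mem_left _ _ hmem_pow
end
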